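/- arXiv:1204.0074 — 3 statements merged into one kernel-verified Lean document; each statement's English description precedes it below -/
import Mathlib

section
/- Let X be a nonempty compact Hausdorff space. Then the set I(X) of all idempotent probability measures on X is a compact subset of the product space ℝ^{C(X, ℝ)} equipped with the product (pointwise convergence) topology. -/
/-- A functional `μ : C(X, ℝ) → ℝ` is an idempotent probability measure if it
sends constants to their values, is additive with respect to adding constants,
and turns pointwise maxima into maxima. -/
def IsIdempotentProbabilityMeasure {X : Type*} [TopologicalSpace X]
    (μ : C(X, ℝ) → ℝ) : Prop :=
  (∀ c : ℝ, μ (ContinuousMap.const X c) = c) ∧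
  (∀ (c : ℝ) (φ : C(X, ℝ)), μ (φ + ContinuousMap.const X c) = μ φ + c) ∧
  (∀ φ ψ : C(X, ℝ), μ (φ ⊔ ψ) = max (μ φ) (μ ψ))

/-- The set `I(X)` of idempotent probability measures on a nonempty compact
Hausdorff space `X` is compact in `ℝ^{C(X,ℝ)}` with the product topology. -/
theorem isCompact_idempotentProbabilityMeasures
    {X : Type*} [TopologicalSpace X] [CompactSpace X] [T2Space X] [Nonempty X] :
    IsCompact {μ : C(X, ℝ) → ℝ | IsIdempotentProbabilityMeasure μ} := by
  have hmono : ∀ μ : C(X, ℝ) → ℝ, IsIdempotentProbabilityMeasure μ →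
      ∀ φ ψ : C(X, ℝ), φ ≤ ψ → μ φ ≤ μ ψ := by
    rintro μ ⟨-, -, h⟩ φ ψ hle
    have := h φ ψ
    rw [sup_eq_right.mpr hle] at this
    rw [this]
    exact le_max_left _ _
  refine IsCompact.of_isClosed_subset
    (isCompact_univ_pi (fun φ : C(X, ℝ) => isCompact_Icc (a := -‖φ‖) (b := ‖φ‖))) ?_ ?_
  · simp only [IsIdempotentProbabilityMeasure, Set.ofPred_and, Set.ofPred_forall]
    refine IsClosed.inter ?_ (IsClosed.inter ?_ ?_)
    · exact isClosed_iInter fun c => isClosed_eq (continuous_apply _) continuous_const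
    · exact isClosed_iInter fun c => isClosed_iInter fun φ =>
        isClosed_eq (continuous_apply _) ((continuous_apply _).add continuous_const)
    · exact isClosed_iInter fun φ => isClosed_iInter fun ψ =>
        isClosed_eq (continuous_apply _) ((continuous_apply φ).max (continuous_apply ψ))
  · intro μ hμ φ _
    have h1 := hmono μ hμ (ContinuousMap.const X (-‖φ‖)) φ
      (fun x => ContinuousMap.neg_norm_le_apply φ x)
    have h2 := hmono μ hμ φ (ContinuousMap.const X ‖φ‖)
      (fun x => ContinuousMap.apply_le_norm φ x)
    rw [hμ.1] at h1 h2
    exact ⟨h1, h2⟩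
end

section
/- The functor I is monomorphic: if i : A → X is a continuous injective map between compact Hausdorff spaces, then the induced map I(i) : I(A) → I(X), defined by I(i)(μ)(φ) = μ(φ ∘ i) for φ ∈ C(X, ℝ), is injective. -/
theorem pushforward_isIdempotentProbabilityMeasure'
    {X Y : Type*} [TopologicalSpace X] [TopologicalSpace Y]
    (f : C(X, Y)) {μ : C(X, ℝ) → ℝ} (hμ : IsIdempotentProbabilityMeasure μ) :
    IsIdempotentProbabilityMeasure (fun φ : C(Y, ℝ) => μ (φ.comp f)) := by
  obtain ⟨h1, h2, h3⟩ := hμ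
  refine ⟨fun c => ?_, fun c φ => ?_, fun φ ψ => ?_⟩
  · have h : (ContinuousMap.const Y c).comp f = ContinuousMap.const X c :=
      ContinuousMap.ext fun _ => rfl
    simp only [h, h1]
  · have h : (φ + ContinuousMap.const Y c).comp f
        = φ.comp f + ContinuousMap.const X c := ContinuousMap.ext fun _ => rfl
    simp only [h, h2]
  · have h : (φ ⊔ ψ).comp f = φ.comp f ⊔ ψ.comp f :=
      ContinuousMap.ext fun _ => rfl
    simp only [h, h3]

/-- The induced map `I(f) : I(X) → I(Y)`, `I(f)(μ)(φ) = μ(φ ∘ f)`. -/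
noncomputable def Imap {X Y : Type*} [TopologicalSpace X] [TopologicalSpace Y]
    (f : C(X, Y)) (μ : {μ : C(X, ℝ) → ℝ // IsIdempotentProbabilityMeasure μ}) :
    {ν : C(Y, ℝ) → ℝ // IsIdempotentProbabilityMeasure ν} :=
  ⟨fun φ => μ.1 (φ.comp f), pushforward_isIdempotentProbabilityMeasure' f μ.2⟩

/-- The functor `I` is monomorphic: for a continuous injective map
`i : A → X` of compact Hausdorff spaces, `I(i) : I(A) → I(X)` is injective. -/
theorem Imap_injective
    {A X : Type*} [TopologicalSpace A] [CompactSpace A] [T2Space A]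
    [TopologicalSpace X] [CompactSpace X] [T2Space X]
    (i : C(A, X)) (hi : Function.Injective i) :
    Function.Injective (Imap i) := by
  intro μ ν h
  apply Subtype.ext
  funext φ
  obtain ⟨g, hg⟩ := ContinuousMap.exists_extension' (i.continuous.isClosedEmbedding hi) φ
  have hgi : g.comp i = φ := ContinuousMap.ext fun a => congrFun hg a
  have h' : μ.1 (g.comp i) = ν.1 (g.comp i) := congrFun (congrArg Subtype.val h) g
  rwa [hgi] at h'
end

section
/- Let X be a nonempty compact Hausdorff space. The set of finitely supported idempotent probability measures—those of the form μ(φ) = max_{1 ≤ i ≤ n} (λᵢ + φ(xᵢ)) for some points x₁, …, xₙ ∈ X and reals λ₁, …, λₙ with max λᵢ = 0—is dense in I(X) with respect to the topology of pointwise convergence; that is, for every μ ∈ I(X), every finite family φ₁, …, φ_k ∈ C(X, ℝ), and every ε > 0, there exists a finitely supported ν ∈ I(X) with |μ(φⱼ) − ν(φⱼ)| < ε for j = 1, …, k. -/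
theorem idem_key {X : Type*} [TopologicalSpace X] [CompactSpace X]
    (μ : C(X, ℝ) → ℝ) (hμ : IsIdempotentProbabilityMeasure μ) (f : C(X, ℝ)) :
    ∃ x : X, ∀ g : C(X, ℝ), μ f - f x ≤ μ g - g x := by
  obtain ⟨-, h2, h3⟩ := hμ
  by_contra hcon
  push Not at hcon
  have main : ∃ g : C(X, ℝ), ∃ δ : ℝ, 0 < δ ∧ μ g ≤ μ f ∧
      ∀ y ∈ (Set.univ : Set X), f y + δ ≤ g y := by
    refine isCompact_univ.induction_on
      (p := fun s => ∃ g : C(X, ℝ), ∃ δ : ℝ, 0 < δ ∧ μ g ≤ μ f ∧ ∀ y ∈ s, f y + δ ≤ g y)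
      ?_ ?_ ?_ ?_
    · exact ⟨f, 1, one_pos, le_rfl, by simp⟩
    · rintro s t hst ⟨g, δ, h, hg, H⟩
      exact ⟨g, δ, h, hg, fun y hy => H y (hst hy)⟩
    · rintro s t ⟨g, δ, h, hg, H⟩ ⟨g', δ', h', hg', H'⟩
      refine ⟨g ⊔ g', min δ δ', lt_min h h', ?_, ?_⟩
      · rw [h3]; exact max_le hg hg'
      · rintro y (hy | hy)
        · have := H y hy
          have h1 := min_le_left δ δ'
          have h4 := le_max_left (g y) (g' y)
          change _ ≤ max (g y) (g' y)
          linarith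
        · have := H' y hy
          have h1 := min_le_right δ δ'
          have h4 := le_max_right (g y) (g' y)
          change _ ≤ max (g y) (g' y)
          linarith
    · intro x _
      obtain ⟨g, hg⟩ := hcon x
      set d := (μ f - f x) - (μ g - g x) with hd
      have hdpos : 0 < d := by linarith
      refine ⟨{y | f y + d / 2 < g y + (μ f - μ g)}, ?_,
        g + ContinuousMap.const X (μ f - μ g), d / 2, by linarith, ?_, ?_⟩
      · apply mem_nhdsWithin_of_mem_nhds
        apply IsOpen.mem_nhds
        · exact isOpen_lt (by fun_prop) (by fun_prop)
        · simp only [Set.mem_setOf_eq]; linarith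
      · rw [h2]; linarith
      · intro y hy
        exact le_of_lt hy
  obtain ⟨g, δ, hδ, hg, H⟩ := main
  have e : (f + ContinuousMap.const X δ) ⊔ g = g := by
    ext y
    exact max_eq_right (H y trivial)
  have h := h3 (f + ContinuousMap.const X δ) g
  rw [e, h2] at h
  have := le_max_left (μ f + δ) (μ g)
  linarith

/-- Finitely supported idempotent probability measures are dense in `I(X)` for
the topology of pointwise convergence: any `μ ∈ I(X)` is approximated, on any
finite family of test functions and within any `ε > 0`, by a measure of the
form `φ ↦ max_i (λᵢ + φ(xᵢ))` with `max_i λᵢ = 0`. -/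
theorem finitelySupported_dense
    {X : Type*} [TopologicalSpace X] [CompactSpace X] [T2Space X] [Nonempty X]
    (μ : C(X, ℝ) → ℝ) (hμ : IsIdempotentProbabilityMeasure μ)
    (k : ℕ) (φ : Fin k → C(X, ℝ)) (ε : ℝ) (hε : 0 < ε) :
    ∃ (n : ℕ) (x : Fin (n + 1) → X) (lam : Fin (n + 1) → ℝ),
      Finset.univ.sup' Finset.univ_nonempty lam = 0 ∧
      ∀ j : Fin k,
        |μ (φ j) - Finset.univ.sup' Finset.univ_nonempty
          (fun i => lam i + (φ j) (x i))| < ε := by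
  choose p hp using idem_key μ hμ
  have h0 : μ (ContinuousMap.const X 0) = 0 := hμ.1 0
  let F : Fin (k + 1) → C(X, ℝ) := Fin.cons (ContinuousMap.const X 0) φ
  refine ⟨k, fun i => p (F i), fun i => μ (F i) - F i (p (F i)), ?_, ?_⟩
  · apply le_antisymm
    · apply Finset.sup'_le
      intro i _
      have := hp (F i) (ContinuousMap.const X 0)
      rw [h0] at this
      simpa using this
    · refine le_trans ?_ (Finset.le_sup' _ (Finset.mem_univ (0 : Fin (k + 1))))
      change (0:ℝ) ≤ μ (ContinuousMap.const X 0) - 0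
      rw [h0, sub_zero]
  · intro j
    have : Finset.univ.sup' Finset.univ_nonempty
        (fun i => μ (F i) - F i (p (F i)) + (φ j) (p (F i))) = μ (φ j) := by
      apply le_antisymm
      · apply Finset.sup'_le
        intro i _
        have := hp (F i) (φ j)
        linarith
      · refine le_trans ?_ (Finset.le_sup' _ (Finset.mem_univ j.succ))
        simp [F]
    rw [this]
    simpa using hε
end
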